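/- Let C be a regular, irreducible curve that is projective over a field k, with function field F = k(C), arithmetic genus t, and a k-rational point O. Suppose P ≠ O is a closed point with d = deg(P) ≥ 3t + 1, and l_1^+, l_2^+, l_1^− are nonzero elements of RR_{d−1}. Then there exist nonzero m^+, m^− in RR_{d−1} such that {f_P, l_1^+} + {f_P, l_2^+} − {f_P, l_1^−} ≡ {f_P, m^+} − {f_P, m^−} modulo the subgroup F_{d−1} of K₂(F). -/

import Mathlib

open scoped TensorProduct

noncomputable section

/-- The set of Steinberg relations in `Fˣ ⊗_ℤ Fˣ` (written additively):
the elements `a ⊗ b` with `a + b = 1` in `F`. -/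
def SteinbergSet (F : Type*) [Field F] :
    Set (TensorProduct ℤ (Additive Fˣ) (Additive Fˣ)) :=
  { x | ∃ a b : Fˣ, (a : F) + (b : F) = 1 ∧
      x = Additive.ofMul a ⊗ₜ[ℤ] Additive.ofMul b }

/-- Milnor's `K₂` of a field, via Matsumoto's presentation. -/
abbrev K2 (F : Type*) [Field F] :=
  (TensorProduct ℤ (Additive Fˣ) (Additive Fˣ)) ⧸
    Submodule.span ℤ (SteinbergSet F)

/-- The symbol `{f, g}` in `K₂(F)`. -/
def symbol {F : Type*} [Field F] (f g : Fˣ) : K2 F :=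
  Submodule.Quotient.mk (Additive.ofMul f ⊗ₜ[ℤ] Additive.ofMul g)

/-- The degree of a divisor `D` on the curve: `∑_P deg(P) · D(P)`,
where `deg P = [k(P) : k]`. -/
def divDeg (k : Type*) [Field k] {Pt : Type*} (res : Pt → Type*)
    [∀ P, Field (res P)] [∀ P, Algebra k (res P)] (D : Pt →₀ ℤ) : ℤ :=
  ∑ᶠ P, (Module.finrank k (res P) : ℤ) * D P

/-- Axioms for a regular, irreducible curve `C`, projective over a field `k`, with
`H⁰(C, O_C) = k`, presented through: its function field `F = k(C)`, its set `Pt` of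
closed points, the residue fields `res P = k(P)`, the normalized valuations `ord P`,
the evaluation maps `ev P` (evaluation at `P` of functions regular at `P`), the
Riemann-Roch spaces `L D = H⁰(C, O_C(D))`, and the arithmetic genus
`t = dim_k H¹(C, O_C)`, characterized by the Riemann-Roch relations. -/
structure IsProjCurve (k F : Type*) [Field k] [Field F] [Algebra k F]
    {Pt : Type*} (res : Pt → Type*) [∀ P, Field (res P)] [∀ P, Algebra k (res P)]
    (ord : Pt → F → ℤ) (ev : ∀ P, F → res P)
    (L : (Pt →₀ ℤ) → Submodule k F) (t : ℕ) : Prop where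
  finiteDimensional_res : ∀ P, FiniteDimensional k (res P)
  ord_mul : ∀ P (f g : F), f ≠ 0 → g ≠ 0 → ord P (f * g) = ord P f + ord P g
  ord_add : ∀ P (f g : F), f ≠ 0 → g ≠ 0 → f + g ≠ 0 →
      min (ord P f) (ord P g) ≤ ord P (f + g)
  ord_algebraMap : ∀ P (c : k), c ≠ 0 → ord P (algebraMap k F c) = 0
  ord_uniformizer : ∀ P, ∃ f : F, f ≠ 0 ∧ ord P f = 1
  ord_separates : ∀ P Q, (∀ f : F, ord P f = ord Q f) → P = Q
  support_finite : ∀ f : F, f ≠ 0 → {P | ord P f ≠ 0}.Finite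
  degree_formula : ∀ f : F, f ≠ 0 →
      ∑ᶠ P, (Module.finrank k (res P) : ℤ) * ord P f = 0
  ev_zero : ∀ P, ev P 0 = 0
  ev_one : ∀ P, ev P 1 = 1
  ev_add : ∀ P (f g : F), f ≠ 0 → g ≠ 0 → 0 ≤ ord P f → 0 ≤ ord P g →
      ev P (f + g) = ev P f + ev P g
  ev_mul : ∀ P (f g : F), f ≠ 0 → g ≠ 0 → 0 ≤ ord P f → 0 ≤ ord P g →
      ev P (f * g) = ev P f * ev P g
  ev_algebraMap : ∀ P (c : k), ev P (algebraMap k F c) = algebraMap k (res P) c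
  ev_eq_zero_iff : ∀ P (f : F), f ≠ 0 → 0 ≤ ord P f → (ev P f = 0 ↔ 0 < ord P f)
  ev_surjective : ∀ P (y : res P), ∃ f : F, f ≠ 0 ∧ 0 ≤ ord P f ∧ ev P f = y
  mem_L : ∀ (D : Pt →₀ ℤ) (f : F), f ∈ L D ↔ (f ≠ 0 → ∀ P, 0 ≤ D P + ord P f)
  finiteDimensional_L : ∀ D, FiniteDimensional k (L D)
  global_sections : ∀ f : F, f ∈ L 0 ↔ ∃ c : k, algebraMap k F c = f
  rr_ineq : ∀ D : Pt →₀ ℤ,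
      divDeg k res D + 1 - t ≤ (Module.finrank k (L D) : ℤ)
  rr_eq : ∀ D : Pt →₀ ℤ, 2 * (t : ℤ) - 2 < divDeg k res D →
      (Module.finrank k (L D) : ℤ) = divDeg k res D + 1 - t

/-- `T` is the tame symbol `K₂(F) → ∐_{P} k(P)^*`: it is determined by
`T_P({f,g}) = (-1)^{ord_P(f)·ord_P(g)} (f^{ord_P(g)} / g^{ord_P(f)})(P)`. -/
def IsTameSymbol {F : Type*} [Field F] {Pt : Type*} {res : Pt → Type*}
    [∀ P, Field (res P)]
    (ord : Pt → F → ℤ) (ev : ∀ P, F → res P)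
    (T : K2 F →+ Π₀ P : Pt, Additive ((res P)ˣ)) : Prop :=
  ∀ (f g : Fˣ) (P : Pt),
    ((Additive.toMul (T (symbol f g) P) : (res P)ˣ) : res P) =
      ev P (((-1 : Fˣ) ^ (ord P (f : F) * ord P (g : F)) *
        f ^ (ord P (g : F)) * g ^ (-ord P (f : F)) : Fˣ) : F)

/-- `F_d`: the subgroup of `K₂(F)` generated by the symbols `{f, g}` with
`|(f)| ∪ |(g)| ⊆ C_{≤ d}`. -/
def Fsub (k : Type*) [Field k] {F : Type*} [Field F] {Pt : Type*} (res : Pt → Type*)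
    [∀ P, Field (res P)] [∀ P, Algebra k (res P)]
    (ord : Pt → F → ℤ) (d : ℕ) : AddSubgroup (K2 F) :=
  AddSubgroup.closure
    { x | ∃ f g : Fˣ,
        (∀ P, ord P (f : F) ≠ 0 → Module.finrank k (res P) ≤ d) ∧
        (∀ P, ord P (g : F) ≠ 0 → Module.finrank k (res P) ≤ d) ∧
        x = symbol f g }

section Symbols

variable {F : Type*} [Field F]

lemma symbol_mul_left (a b c : Fˣ) : symbol (a * b) c = symbol a c + symbol b c := by
  simp only [symbol, ofMul_mul, TensorProduct.add_tmul, Submodule.Quotient.mk_add]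

lemma symbol_mul_right (a b c : Fˣ) : symbol a (b * c) = symbol a b + symbol a c := by
  simp only [symbol, ofMul_mul, TensorProduct.tmul_add, Submodule.Quotient.mk_add]

lemma symbol_one_right (a : Fˣ) : symbol a 1 = 0 := by
  simp only [symbol, ofMul_one, TensorProduct.tmul_zero, Submodule.Quotient.mk_zero]

lemma symbol_eq_zero_of_add_eq_one {a b : Fˣ} (h : (a : F) + b = 1) : symbol a b = 0 :=
  (Submodule.Quotient.mk_eq_zero _).2 (Submodule.subset_span ⟨a, b, h, rfl⟩)

/-- If `a - b = f * g`, then `{f, b / a} = -{g / a, b / a}`. -/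
lemma symbol_div_of_sub_eq_mul {a b f g : Fˣ} (h : (a : F) - b = f * g) :
    symbol f (b * a⁻¹) = -symbol (g * a⁻¹) (b * a⁻¹) := by
  rw [eq_neg_iff_add_eq_zero, ← symbol_mul_left]
  apply symbol_eq_zero_of_add_eq_one
  push_cast
  rw [← mul_assoc, ← h, ← add_mul, sub_add_cancel, ← Units.val_inv_eq_inv_val, Units.mul_inv]

end Symbols

section Divisors

variable {k : Type*} [Field k] {Pt : Type*} {res : Pt → Type*}
  [∀ P, Field (res P)] [∀ P, Algebra k (res P)]

lemma divDeg_support_finite (D : Pt →₀ ℤ) :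
    (Function.support fun P => (Module.finrank k (res P) : ℤ) * D P).Finite :=
  D.hasFiniteSupport.subset fun P hP => by
    simp only [Function.mem_support] at hP ⊢
    exact right_ne_zero_of_mul hP

lemma divDeg_add (D E : Pt →₀ ℤ) :
    divDeg k res (D + E) = divDeg k res D + divDeg k res E := by
  simp only [divDeg, Finsupp.add_apply, mul_add]
  exact finsum_add_distrib (divDeg_support_finite D) (divDeg_support_finite E)

lemma divDeg_single (P : Pt) (n : ℤ) :
    divDeg k res (Finsupp.single P n) = Module.finrank k (res P) * n := by
  rw [divDeg, finsum_eq_single _ P]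
  · simp
  · intro Q hQ
    simp [Finsupp.single_eq_of_ne hQ]

lemma divDeg_nonneg {D : Pt →₀ ℤ} (hD : ∀ Q, 0 ≤ D Q) : 0 ≤ divDeg k res D :=
  finsum_nonneg fun Q => mul_nonneg (Int.natCast_nonneg _) (hD Q)

lemma finrank_le_divDeg {D : Pt →₀ ℤ} (hD : ∀ Q, 0 ≤ D Q) {P : Pt} (hP : D P ≠ 0) :
    (Module.finrank k (res P) : ℤ) ≤ divDeg k res D := by
  have h1 : 1 ≤ D P := by have := hD P; omega
  have h2 : (Module.finrank k (res P) : ℤ) * D P ≤ divDeg k res D :=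
    single_le_finsum P (divDeg_support_finite D)
      fun Q => mul_nonneg (Int.natCast_nonneg _) (hD Q)
  nlinarith

end Divisors

/-- The divisor of `f` is supported on points of degree at most `d`. -/
def SupportedInDegreeLE (k : Type*) [Field k] {F : Type*} [Field F] {Pt : Type*}
    (res : Pt → Type*) [∀ P, Field (res P)] [∀ P, Algebra k (res P)]
    (ord : Pt → F → ℤ) (d : ℕ) (f : Fˣ) : Prop :=
  ∀ P, ord P (f : F) ≠ 0 → Module.finrank k (res P) ≤ d

namespace IsProjCurve

variable {k F : Type*} [Field k] [Field F] [Algebra k F]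
  {Pt : Type*} {res : Pt → Type*} [∀ P, Field (res P)] [∀ P, Algebra k (res P)]
  {ord : Pt → F → ℤ} {ev : ∀ P, F → res P}
  {L : (Pt →₀ ℤ) → Submodule k F} {t : ℕ}

lemma ord_one (hC : IsProjCurve k F res ord ev L t) (P : Pt) : ord P 1 = 0 := by
  simpa using hC.ord_algebraMap P 1 one_ne_zero

lemma ord_inv (hC : IsProjCurve k F res ord ev L t) (P : Pt) (f : Fˣ) :
    ord P ((f⁻¹ : Fˣ) : F) = -ord P (f : F) := by
  have h := hC.ord_mul P (f : F) ((f⁻¹ : Fˣ) : F) f.ne_zero (f⁻¹).ne_zero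
  rw [Units.mul_inv, hC.ord_one] at h
  omega

lemma supportedInDegreeLE_mul (hC : IsProjCurve k F res ord ev L t) {d : ℕ} {f g : Fˣ}
    (hf : SupportedInDegreeLE k res ord d f) (hg : SupportedInDegreeLE k res ord d g) :
    SupportedInDegreeLE k res ord d (f * g) := by
  intro P hP
  rw [Units.val_mul, hC.ord_mul P _ _ f.ne_zero g.ne_zero] at hP
  by_cases h : ord P (f : F) = 0
  · exact hg P (by omega)
  · exact hf P h

lemma supportedInDegreeLE_inv (hC : IsProjCurve k F res ord ev L t) {d : ℕ} {f : Fˣ}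
    (hf : SupportedInDegreeLE k res ord d f) :
    SupportedInDegreeLE k res ord d f⁻¹ := by
  intro P hP
  rw [hC.ord_inv] at hP
  exact hf P (by omega)

/-- The principal divisor of a nonzero function. -/
def principalDivisor (hC : IsProjCurve k F res ord ev L t) (f : Fˣ) : Pt →₀ ℤ :=
  Finsupp.ofSupportFinite (fun P => ord P (f : F)) (hC.support_finite f f.ne_zero)

@[simp]
lemma principalDivisor_apply (hC : IsProjCurve k F res ord ev L t) (f : Fˣ) (P : Pt) :
    hC.principalDivisor f P = ord P (f : F) := rfl

lemma divDeg_principalDivisor (hC : IsProjCurve k F res ord ev L t) (f : Fˣ) :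
    divDeg k res (hC.principalDivisor f) = 0 :=
  hC.degree_formula f f.ne_zero

lemma mul_mem_L (hC : IsProjCurve k F res ord ev L t) {D E : Pt →₀ ℤ} {f g : F}
    (hf : f ∈ L D) (hg : g ∈ L E) : f * g ∈ L (D + E) := by
  rw [hC.mem_L] at hf hg ⊢
  intro h P
  have hf0 := left_ne_zero_of_mul h
  have hg0 := right_ne_zero_of_mul h
  rw [hC.ord_mul P f g hf0 hg0, Finsupp.add_apply]
  linarith [hf hf0 P, hg hg0 P]

/-- If `D + (f)` is effective, every point in its support has degree at most `deg D`. -/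
lemma finrank_le_of_ord_ne (hC : IsProjCurve k F res ord ev L t) {D : Pt →₀ ℤ} {f : Fˣ}
    (hf : ∀ P, 0 ≤ D P + ord P (f : F)) {P : Pt} (hP : D P + ord P (f : F) ≠ 0) :
    (Module.finrank k (res P) : ℤ) ≤ divDeg k res D := by
  have h := finrank_le_divDeg (k := k) (res := res)
    (D := D + hC.principalDivisor f) (by simpa using hf) (P := P) (by simpa using hP)
  rwa [divDeg_add, divDeg_principalDivisor, add_zero] at h

lemma divDeg_nonneg_of_ord (hC : IsProjCurve k F res ord ev L t) {D : Pt →₀ ℤ} {f : Fˣ}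
    (hf : ∀ P, 0 ≤ D P + ord P (f : F)) : 0 ≤ divDeg k res D := by
  have h := divDeg_nonneg (k := k) (res := res)
    (D := D + hC.principalDivisor f) (by simpa using hf)
  rwa [divDeg_add, divDeg_principalDivisor, add_zero] at h

section RationalPoint

variable {O : Pt} {d : ℕ}

lemma supportedInDegreeLE_of_mem_L (hC : IsProjCurve k F res ord ev L t)
    (hO : Module.finrank k (res O) = 1) (hd : 1 ≤ d) {f : Fˣ}
    (hf : (f : F) ∈ L (Finsupp.single O ((d : ℤ) - 1))) :
    SupportedInDegreeLE k res ord (d - 1) f := by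
  have hf' := (hC.mem_L _ _).1 hf f.ne_zero
  intro Q hQ
  have hdeg (h : Finsupp.single O ((d : ℤ) - 1) Q + ord Q (f : F) ≠ 0) :
      Module.finrank k (res Q) ≤ d - 1 := by
    have := hC.finrank_le_of_ord_ne hf' h
    rw [divDeg_single, hO] at this
    omega
  by_cases hQO : Q = O
  · subst hQO
    by_cases hd2 : 2 ≤ d
    · omega
    · obtain rfl : d = 1 := by omega
      exact hdeg (by simpa using hQ)
  · exact hdeg (by rwa [Finsupp.single_eq_of_ne hQO, zero_add])

lemma ord_nonneg_of_mem_L_single (hC : IsProjCurve k F res ord ev L t) {P : Pt}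
    (hP : P ≠ O) {n : ℤ} {f : F} (hf : f ∈ L (Finsupp.single O n)) (hf0 : f ≠ 0) :
    0 ≤ ord P f := by
  simpa [Finsupp.single_eq_of_ne hP] using (hC.mem_L _ _).1 hf hf0 P

/-- A nonzero function with poles only at `O` of order less than `deg P` does not
vanish at `P`. -/
lemma ev_ne_zero_of_mem_L (hC : IsProjCurve k F res ord ev L t)
    (hO : Module.finrank k (res O) = 1) {P : Pt} (hP : P ≠ O)
    (hd : d = Module.finrank k (res P)) {f : F} (hf0 : f ≠ 0)
    (hf : f ∈ L (Finsupp.single O ((d : ℤ) - 1))) : ev P f ≠ 0 := by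
  intro h
  have h1 := (hC.ev_eq_zero_iff P f hf0 (hC.ord_nonneg_of_mem_L_single hP hf hf0)).1 h
  have h2 := hC.finrank_le_of_ord_ne (f := Units.mk0 f hf0)
    ((hC.mem_L _ _).1 hf hf0) (P := P)
    (by rw [Finsupp.single_eq_of_ne hP]; simpa using h1.ne')
  rw [divDeg_single, hO] at h2
  omega

/-- Evaluation at `P ≠ O` as a linear map on `L(n(O))`. -/
def evLinear (hC : IsProjCurve k F res ord ev L t) {P : Pt} (hP : P ≠ O) (n : ℤ) :
    L (Finsupp.single O n) →ₗ[k] res P where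
  toFun f := ev P f
  map_add' f g := by
    obtain ⟨f, hf⟩ := f
    obtain ⟨g, hg⟩ := g
    by_cases hf0 : f = 0
    · simp [hf0, hC.ev_zero]
    by_cases hg0 : g = 0
    · simp [hg0, hC.ev_zero]
    exact hC.ev_add P f g hf0 hg0 (hC.ord_nonneg_of_mem_L_single hP hf hf0)
      (hC.ord_nonneg_of_mem_L_single hP hg hg0)
  map_smul' c f := by
    obtain ⟨f, hf⟩ := f
    by_cases hf0 : f = 0
    · simp [hf0, hC.ev_zero]
    by_cases hc : c = 0
    · simp [hc, hC.ev_zero]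
    simp only [SetLike.mk_smul_mk, Algebra.smul_def, RingHom.id_apply]
    rw [hC.ev_mul P _ _ (by simpa using hc) hf0 (hC.ord_algebraMap P c hc).ge
      (hC.ord_nonneg_of_mem_L_single hP hf hf0), hC.ev_algebraMap]

@[simp]
lemma evLinear_apply (hC : IsProjCurve k F res ord ev L t) {P : Pt} (hP : P ≠ O) (n : ℤ)
    (f : L (Finsupp.single O n)) : hC.evLinear hP n f = ev P (f : F) := rfl

/-- Products of pairs of functions in `L((d-1)(O))` with the same value at `P` have the
same symbol with `f_P` modulo `F_{d-1}`. -/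
lemma symbol_sub_mem_Fsub (hC : IsProjCurve k F res ord ev L t)
    (hO : Module.finrank k (res O) = 1) {P : Pt} (hP : P ≠ O)
    (hd : d = Module.finrank k (res P)) (htd : t < d)
    {fP : Fˣ} {DP : Pt →₀ ℤ}
    (hDPeff : ∀ Q, 0 ≤ DP Q) (hDPdeg : divDeg k res DP = t)
    (hfP : ∀ Q, ord Q (fP : F) =
      ((Finsupp.single P 1 - DP - ((d : ℤ) - t) • Finsupp.single O 1 : Pt →₀ ℤ)) Q)
    {a₁ a₂ b₁ b₂ : Fˣ}
    (ha₁ : (a₁ : F) ∈ L (Finsupp.single O ((d : ℤ) - 1)))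
    (ha₂ : (a₂ : F) ∈ L (Finsupp.single O ((d : ℤ) - 1)))
    (hb₁ : (b₁ : F) ∈ L (Finsupp.single O ((d : ℤ) - 1)))
    (hb₂ : (b₂ : F) ∈ L (Finsupp.single O ((d : ℤ) - 1)))
    (hev : ev P (a₁ : F) * ev P (a₂ : F) = ev P (b₁ : F) * ev P (b₂ : F)) :
    symbol fP b₁ + symbol fP b₂ - (symbol fP a₁ + symbol fP a₂) ∈
      Fsub k res ord (d - 1) := by
  have hsupp {f : Fˣ} := hC.supportedInDegreeLE_of_mem_L hO (Nat.one_le_of_lt htd) (f := f)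
  rw [← symbol_mul_right, ← symbol_mul_right]
  have hquot : symbol fP (b₁ * b₂) - symbol fP (a₁ * a₂) =
      symbol fP (b₁ * b₂ * (a₁ * a₂)⁻¹) := by
    rw [sub_eq_iff_eq_add, ← symbol_mul_right, inv_mul_cancel_right]
  rw [hquot]
  by_cases hab : a₁ * a₂ = b₁ * b₂
  · rw [hab, mul_inv_cancel, symbol_one_right]
    exact zero_mem _
  have hab' : ((a₁ * a₂ : Fˣ) : F) - (b₁ * b₂ : Fˣ) ≠ 0 :=
    sub_ne_zero.2 fun h => hab (Units.ext h)
  set a := a₁ * a₂ with ha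
  set b := b₁ * b₂ with hb
  have haL : (a : F) ∈ L (Finsupp.single O (((d : ℤ) - 1) + ((d : ℤ) - 1))) := by
    rw [Finsupp.single_add]
    exact hC.mul_mem_L ha₁ ha₂
  have hbL : (b : F) ∈ L (Finsupp.single O (((d : ℤ) - 1) + ((d : ℤ) - 1))) := by
    rw [Finsupp.single_add]
    exact hC.mul_mem_L hb₁ hb₂
  have habL := Submodule.sub_mem _ haL hbL
  have hevab : ev P (a : F) = ev P (b : F) := by
    rw [ha, hb, Units.val_mul, Units.val_mul,
      hC.ev_mul P _ _ a₁.ne_zero a₂.ne_zero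
        (hC.ord_nonneg_of_mem_L_single hP ha₁ a₁.ne_zero)
        (hC.ord_nonneg_of_mem_L_single hP ha₂ a₂.ne_zero),
      hC.ev_mul P _ _ b₁.ne_zero b₂.ne_zero
        (hC.ord_nonneg_of_mem_L_single hP hb₁ b₁.ne_zero)
        (hC.ord_nonneg_of_mem_L_single hP hb₂ b₂.ne_zero), hev]
  have hev0 : ev P ((a : F) - b) = 0 := by
    have h := map_sub (hC.evLinear hP _) ⟨a, haL⟩ ⟨b, hbL⟩
    simpa [hevab] using h
  have hordP : 0 < ord P ((a : F) - b) :=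
    (hC.ev_eq_zero_iff P _ hab' (hC.ord_nonneg_of_mem_L_single hP habL hab')).1 hev0
  set g : Fˣ := Units.mk0 _ hab' * fP⁻¹ with hg
  have hfg : (a : F) - b = fP * g := by
    rw [← Units.val_mul, hg, mul_comm fP, inv_mul_cancel_right, Units.val_mk0]
  have hordg (Q : Pt) : ord Q (g : F) = ord Q ((a : F) - b) - ord Q (fP : F) := by
    rw [hfg, hC.ord_mul Q _ _ fP.ne_zero g.ne_zero]
    ring
  have heff (Q : Pt) : 0 ≤ (Finsupp.single O ((d : ℤ) + t - 2) + -DP : Pt →₀ ℤ) Q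
      + ord Q (g : F) := by
    have h1 := (hC.mem_L _ _).1 habL hab' Q
    rw [hordg, hfP]
    by_cases hQO : Q = O
    · subst hQO
      simp [Finsupp.single_eq_of_ne hP.symm] at h1 ⊢
      linarith
    · by_cases hQP : Q = P
      · subst hQP
        simp [Finsupp.single_eq_of_ne hQO] at h1 ⊢
        omega
      · simp [Finsupp.single_eq_of_ne hQO, Finsupp.single_eq_of_ne hQP] at h1 ⊢
        linarith
  have hnegdeg : divDeg k res (-DP) = -t := by
    rw [← hDPdeg, eq_neg_iff_add_eq_zero, ← divDeg_add, neg_add_cancel]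
    simp [divDeg]
  have hdeg : divDeg k res (Finsupp.single O ((d : ℤ) + t - 2) + -DP) = d - 2 := by
    rw [divDeg_add, divDeg_single, hO, hnegdeg]
    push_cast
    ring
  have hd2 : (2 : ℤ) ≤ d := by
    have := hC.divDeg_nonneg_of_ord heff
    omega
  have hgsupp : SupportedInDegreeLE k res ord (d - 1) g := by
    intro Q hQ
    by_cases hQO : Q = O
    · subst hQO
      omega
    by_cases hQD : DP Q = 0
    · have := hC.finrank_le_of_ord_ne heff (P := Q)
        (by simpa [Finsupp.single_eq_of_ne hQO, hQD] using hQ)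
      omega
    · have := finrank_le_divDeg (k := k) (res := res) hDPeff hQD
      omega
  have hasupp := hC.supportedInDegreeLE_mul (hsupp ha₁) (hsupp ha₂)
  have hbsupp := hC.supportedInDegreeLE_mul (hsupp hb₁) (hsupp hb₂)
  rw [symbol_div_of_sub_eq_mul hfg]
  exact neg_mem (AddSubgroup.subset_closure ⟨_, _,
    hC.supportedInDegreeLE_mul hgsupp (hC.supportedInDegreeLE_inv hasupp),
    hC.supportedInDegreeLE_mul hbsupp (hC.supportedInDegreeLE_inv hasupp), rfl⟩)

/-- For `d = deg P ≥ 3t + 1` and values `α, β, γ` at `P` there are `x, w, y`, not all zero,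
in `L((d-1)(O))` with `α x = w β` and `w γ = y` at `P`. -/
lemma exists_values_eq (hC : IsProjCurve k F res ord ev L t)
    (hO : Module.finrank k (res O) = 1) {P : Pt} (hP : P ≠ O)
    (hd : d = Module.finrank k (res P)) (hd1 : 3 * t + 1 ≤ d) (α β γ : res P) :
    ∃ x ∈ L (Finsupp.single O ((d : ℤ) - 1)), ∃ w ∈ L (Finsupp.single O ((d : ℤ) - 1)),
      ∃ y ∈ L (Finsupp.single O ((d : ℤ) - 1)), (x ≠ 0 ∨ w ≠ 0 ∨ y ≠ 0) ∧
        α * ev P x = ev P w * β ∧ ev P w * γ = ev P y := by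
  set V := L (Finsupp.single O ((d : ℤ) - 1))
  have := hC.finiteDimensional_res P
  have : FiniteDimensional k V := hC.finiteDimensional_L _
  let e : V →ₗ[k] res P := hC.evLinear hP _
  let φ : V × V × V →ₗ[k] res P × res P :=
    LinearMap.prod
      (LinearMap.coprod (LinearMap.mulLeft k α ∘ₗ e)
        (LinearMap.coprod (-(LinearMap.mulRight k β ∘ₗ e)) 0))
      (LinearMap.coprod 0 (LinearMap.coprod (LinearMap.mulRight k γ ∘ₗ e) (-e)))
  have hφ : LinearMap.ker φ ≠ ⊥ := by
    apply LinearMap.ker_ne_bot_of_finrank_lt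
    have h := hC.rr_ineq (Finsupp.single O ((d : ℤ) - 1))
    rw [divDeg_single, hO] at h
    change _ ≤ (Module.finrank k V : ℤ) at h
    rw [Module.finrank_prod, Module.finrank_prod, Module.finrank_prod, ← hd]
    omega
  obtain ⟨⟨x, w, y⟩, hker, hne⟩ := Submodule.exists_mem_ne_zero_of_ne_bot hφ
  refine ⟨x, x.2, w, w.2, y, y.2, ?_, ?_⟩
  · by_contra! h
    exact hne (by ext <;> simp [h.1, h.2.1, h.2.2])
  · have h : φ (x, w, y) = 0 := hker
    simp only [φ, e, LinearMap.prod_apply, Function.prod_apply, LinearMap.coprod_apply,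
      LinearMap.comp_apply, LinearMap.mulLeft_apply, LinearMap.mulRight_apply, LinearMap.neg_apply,
      LinearMap.zero_apply, evLinear_apply, add_zero, zero_add, Prod.mk_eq_zero,
      ← sub_eq_add_neg, sub_eq_zero] at h
    exact h

end RationalPoint

end IsProjCurve

/-- Lemma `123lemma`.  Let `C` be a regular, irreducible curve,
projective over `k`, with function field `F`, arithmetic genus `t` and a `k`-rational
point `O`.  Suppose `P ≠ O` has `d = deg(P) ≥ 3t + 1`, `f_P` has divisor
`(P) - D_P - (d - t)(O)` with `D_P` effective of degree `t`, and `l₁⁺, l₂⁺, l₁⁻` are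
nonzero elements of `RR_{d-1}`.  Then there are nonzero `m⁺, m⁻` in `RR_{d-1}` with
`{f_P, l₁⁺} + {f_P, l₂⁺} - {f_P, l₁⁻} ≡ {f_P, m⁺} - {f_P, m⁻}` modulo `F_{d-1}`. -/
theorem statement15 (k F : Type*) [Field k] [Field F] [Algebra k F]
    {Pt : Type*} (res : Pt → Type*) [∀ P, Field (res P)] [∀ P, Algebra k (res P)]
    (ord : Pt → F → ℤ) (ev : ∀ P, F → res P)
    (L : (Pt →₀ ℤ) → Submodule k F) (t : ℕ)
    (hC : IsProjCurve k F res ord ev L t)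
    (O : Pt) (hO : Module.finrank k (res O) = 1)
    (P : Pt) (hP : P ≠ O) (d : ℕ) (hd : d = Module.finrank k (res P))
    (hd1 : 3 * t + 1 ≤ d)
    (fP : Fˣ) (DP : Pt →₀ ℤ)
    (hDPeff : ∀ Q, 0 ≤ DP Q) (hDPdeg : divDeg k res DP = t)
    (hfP : ∀ Q, ord Q (fP : F) =
      ((Finsupp.single P 1 - DP - ((d : ℤ) - t) • Finsupp.single O 1 : Pt →₀ ℤ)) Q)
    (l1p l2p l1m : Fˣ)
    (hl1p : (l1p : F) ∈ L (Finsupp.single O ((d : ℤ) - 1)))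
    (hl2p : (l2p : F) ∈ L (Finsupp.single O ((d : ℤ) - 1)))
    (hl1m : (l1m : F) ∈ L (Finsupp.single O ((d : ℤ) - 1))) :
    ∃ mp mm : Fˣ,
      (mp : F) ∈ L (Finsupp.single O ((d : ℤ) - 1)) ∧
      (mm : F) ∈ L (Finsupp.single O ((d : ℤ) - 1)) ∧
      symbol fP l1p + symbol fP l2p - symbol fP l1m -
        (symbol fP mp - symbol fP mm) ∈ Fsub k res ord (d - 1) := by
  obtain ⟨x, hx, w, hw, y, hy, hne, h1, h2⟩ :=
    hC.exists_values_eq hO hP hd hd1 (ev P l1p) (ev P l1m) (ev P l2p)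
  have hnz {f : F} (hf : f ∈ L (Finsupp.single O ((d : ℤ) - 1))) : ev P f = 0 ↔ f = 0 :=
    ⟨fun h => by_contra fun hf0 => hC.ev_ne_zero_of_mem_L hO hP hd hf0 hf h,
      fun h => h ▸ hC.ev_zero P⟩
  have hxw : x = 0 ↔ w = 0 := by
    rw [← hnz hx, ← hnz hw]
    have := congrArg (· = 0) h1
    simpa [hnz hl1p, hnz hl1m] using this
  have hwy : w = 0 ↔ y = 0 := by
    rw [← hnz hw, ← hnz hy]
    have := congrArg (· = 0) h2
    simpa [hnz hl2p] using this
  have hx0 : x ≠ 0 := by tauto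
  have hw0 : w ≠ 0 := by tauto
  have hy0 : y ≠ 0 := by tauto
  have hone : ((1 : Fˣ) : F) ∈ L (Finsupp.single O ((d : ℤ) - 1)) := by
    rw [hC.mem_L]
    intro _ Q
    rw [Units.val_one, hC.ord_one, add_zero]
    exact Finsupp.single_nonneg.2 (by omega) Q
  refine ⟨Units.mk0 y hy0, Units.mk0 x hx0, hy, hx, ?_⟩
  have e1 := hC.symbol_sub_mem_Fsub hO hP hd (by omega) hDPeff hDPdeg hfP
    (a₁ := Units.mk0 w hw0) (a₂ := l1m) (b₁ := l1p) (b₂ := Units.mk0 x hx0)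
    hw hl1m hl1p hx h1.symm
  have e2 := hC.symbol_sub_mem_Fsub hO hP hd (by omega) hDPeff hDPdeg hfP
    (a₁ := Units.mk0 y hy0) (a₂ := 1) (b₁ := Units.mk0 w hw0) (b₂ := l2p)
    hy hone hw hl2p (by simp [hC.ev_one, h2])
  rw [symbol_one_right] at e2
  convert add_mem e1 e2 using 1
  abel


end
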